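/- Let G^i be a spray with coefficients N^i_j and let F be a Finsler structure on U with metric tensor g_{ij} = ½ ∂²(F²)/∂y^i∂y^j. Then S is the geodesic spray of F, i.e. S(∂F²/∂y^i) − ∂F²/∂x^i = 0 on Ω for all i, if and only if the metric tensor is covariant constant with respect to the dynamical covariant derivative: ∇g_{ij} = S(g_{ij}) − Σ_k (N^k_i g_{kj} + N^k_j g_{ik}) = 0 on Ω for all i, j. -/

import Mathlib

noncomputable section

/-- A point `(x, y)` of the tangent space coordinates over `ℝⁿ`. -/
abbrev Pt (n : ℕ) : Type := (Fin n → ℝ) × (Fin n → ℝ)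

/-- `Ω = U × (ℝⁿ \ {0})`. -/
def OmegaSet {n : ℕ} (U : Set (Fin n → ℝ)) : Set (Pt n) :=
  {p : Pt n | p.1 ∈ U ∧ p.2 ≠ 0}

/-- Partial derivative `∂f/∂x^i`. -/
def pdx {n : ℕ} (f : Pt n → ℝ) (i : Fin n) (p : Pt n) : ℝ :=
  fderiv ℝ f p (Pi.single i 1, 0)

/-- Partial derivative `∂f/∂y^i`. -/
def pdy {n : ℕ} (f : Pt n → ℝ) (i : Fin n) (p : Pt n) : ℝ :=
  fderiv ℝ f p (0, Pi.single i 1)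

/-- Second fibre derivative `∂²f/∂y^i∂y^j`. -/
def pdyy {n : ℕ} (f : Pt n → ℝ) (i j : Fin n) : Pt n → ℝ :=
  pdy (pdy f j) i

/-- The spray vector field applied to a function:
`S(f) = Σ_k (y^k ∂f/∂x^k − 2 G^k ∂f/∂y^k)`. -/
def Sop {n : ℕ} (G : Fin n → Pt n → ℝ) (f : Pt n → ℝ) (p : Pt n) : ℝ :=
  ∑ k, (p.2 k * pdx f k p - 2 * G k p * pdy f k p)

/-- Connection coefficients `N^i_j = ∂G^i/∂y^j`. -/
def Ncoef {n : ℕ} (G : Fin n → Pt n → ℝ) (i j : Fin n) : Pt n → ℝ :=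
  pdy (G i) j

/-- Horizontal derivative `δf/δx^i = ∂f/∂x^i − Σ_j N^j_i ∂f/∂y^j`. -/
def deltax {n : ℕ} (G : Fin n → Pt n → ℝ) (f : Pt n → ℝ) (i : Fin n) (p : Pt n) : ℝ :=
  pdx f i p - ∑ j, Ncoef G j i p * pdy f j p

/-- Dynamical covariant derivative of a `(0,2)` family:
`∇T_{ij} = S(T_{ij}) − Σ_k (N^k_i T_{kj} + N^k_j T_{ik})`. -/
def nablaT {n : ℕ} (G : Fin n → Pt n → ℝ) (T : Fin n → Fin n → Pt n → ℝ)
    (i j : Fin n) (p : Pt n) : ℝ :=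
  Sop G (T i j) p - ∑ k, (Ncoef G k i p * T k j p + Ncoef G k j p * T i k p)

/-- `f` is positively `k`-homogeneous in the fibre variable `y`, on `Ω`. -/
def PosHomog {n : ℕ} (U : Set (Fin n → ℝ)) (k : ℤ) (f : Pt n → ℝ) : Prop :=
  ∀ L : ℝ, 0 < L → ∀ p ∈ OmegaSet U, f (p.1, L • p.2) = L ^ k * f p

/-- A spray: smooth, positively 2-homogeneous coefficients `G^i`. -/
def IsSpray {n : ℕ} (U : Set (Fin n → ℝ)) (G : Fin n → Pt n → ℝ) : Prop :=
  ∀ i, ContDiffOn ℝ (⊤ : ℕ∞) (G i) (OmegaSet U) ∧ PosHomog U 2 (G i)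

/-- Components of the Euler-Lagrange 1-form: `(δ_S f)_i = S(∂f/∂y^i) − ∂f/∂x^i`. -/
def EL {n : ℕ} (G : Fin n → Pt n → ℝ) (f : Pt n → ℝ) (i : Fin n) (p : Pt n) : ℝ :=
  Sop G (pdy f i) p - pdx f i p

/-- The metric tensor `g_{ij} = ½ ∂²(F²)/∂y^i∂y^j` of a Finsler function. -/
def metricTensor {n : ℕ} (F : Pt n → ℝ) (i j : Fin n) (p : Pt n) : ℝ :=
  (1 / 2) * pdyy (fun q => F q ^ 2) i j p

/-- A Finsler structure on `U`: smooth, positive, positively 1-homogeneous,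
with invertible metric tensor at every point of `Ω`. -/
def IsFinsler {n : ℕ} (U : Set (Fin n → ℝ)) (F : Pt n → ℝ) : Prop :=
  ContDiffOn ℝ (⊤ : ℕ∞) F (OmegaSet U) ∧ (∀ p ∈ OmegaSet U, 0 < F p) ∧ PosHomog U 1 F ∧
    ∀ p ∈ OmegaSet U, IsUnit (Matrix.of (fun i j => metricTensor F i j p))

/-!
Put `L = F²` and let `E_i = S(∂L/∂y^i) − ∂L/∂x^i` be the Euler–Lagrange components. The mixed
derivatives `∂²L/∂x∂y` cancel when `∂E_i/∂y^j` is symmetrised, leaving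
`∂E_i/∂y^j + ∂E_j/∂y^i = 2 ∇(∂²L/∂y^i∂y^j) = 4 ∇g_{ij}`. Hence `∇g = 0` says exactly that `E`
satisfies the Killing equation of the flat fibre `ℝⁿ`. The homogeneous Killing fields of flat space
are the translations and the rotations, of degrees `0` and `1`, whereas `E` has degree `2`.
Concretely, Euler's identity gives `∑ y^i E_i = ½ ∑ y^i y^j ∂E_i/∂y^j = 0` by skew-symmetry, and
differentiating this along `y^i` gives `E_i − 2 E_i = 0`.
-/

open Filter Topology

section Schwarz

variable {V W : Type*} [NormedAddCommGroup V] [NormedSpace ℝ V]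
  [NormedAddCommGroup W] [NormedSpace ℝ W]

theorem fderiv_fderiv_apply_comm {f : V → W} {x : V} (hf : ContDiffAt ℝ 2 f x) (v w : V) :
    fderiv ℝ (fun z => fderiv ℝ f z v) x w = fderiv ℝ (fun z => fderiv ℝ f z w) x v := by
  have hdf : DifferentiableAt ℝ (fderiv ℝ f) x :=
    (hf.fderiv_right (m := 1) (by norm_num)).differentiableAt one_ne_zero
  have hsymm : IsSymmSndFDerivAt ℝ f x := hf.isSymmSndFDerivAt (by simp)
  rw [fderiv_clm_apply hdf (differentiableAt_const _),
    fderiv_clm_apply hdf (differentiableAt_const _)]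
  simpa using hsymm w v

end Schwarz

section PartialDerivatives

variable {n : ℕ} {f g : Pt n → ℝ} {p : Pt n}

theorem pdy_mul (hf : DifferentiableAt ℝ f p) (hg : DifferentiableAt ℝ g p) (j : Fin n) :
    pdy (fun q => f q * g q) j p = pdy f j p * g p + f p * pdy g j p := by
  rw [pdy, fderiv_fun_mul hf hg]
  simp only [add_apply, smul_apply, smul_eq_mul, pdy]
  ring

theorem pdy_sub (hf : DifferentiableAt ℝ f p) (hg : DifferentiableAt ℝ g p) (j : Fin n) :
    pdy (fun q => f q - g q) j p = pdy f j p - pdy g j p := by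
  rw [pdy, fderiv_fun_sub hf hg]
  rfl

theorem pdy_sum {ι : Type*} {s : Finset ι} {φ : ι → Pt n → ℝ}
    (hφ : ∀ k ∈ s, DifferentiableAt ℝ (φ k) p) (j : Fin n) :
    pdy (fun q => ∑ k ∈ s, φ k q) j p = ∑ k ∈ s, pdy (φ k) j p := by
  rw [pdy, fderiv_fun_sum hφ, sum_apply]
  rfl

theorem pdx_const_mul (c : ℝ) (f : Pt n → ℝ) (i : Fin n) (p : Pt n) :
    pdx (fun q => c * f q) i p = c * pdx f i p :=
  DFunLike.congr_fun (congrFun (fderiv_const_smul_field (f := f) c) p) _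

theorem pdy_const_mul (c : ℝ) (f : Pt n → ℝ) (i : Fin n) (p : Pt n) :
    pdy (fun q => c * f q) i p = c * pdy f i p :=
  DFunLike.congr_fun (congrFun (fderiv_const_smul_field (f := f) c) p) _

theorem pdy_snd_apply (k j : Fin n) (p : Pt n) :
    pdy (fun q => q.2 k) j p = (Pi.single j 1 : Fin n → ℝ) k :=
  congrArg (fun T => T ((0, Pi.single j 1) : Pt n)) (ContinuousLinearMap.fderiv
    ((ContinuousLinearMap.proj k).comp (ContinuousLinearMap.snd ℝ (Fin n → ℝ) (Fin n → ℝ))))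

theorem pdy_eq_zero_of_eventuallyEq_zero (hf : f =ᶠ[𝓝 p] 0) (j : Fin n) : pdy f j p = 0 := by
  simp [pdy, hf.fderiv_eq]

theorem sum_mul_pdy_eq_fderiv (v : Fin n → ℝ) : ∑ j, v j * pdy f j p = fderiv ℝ f p (0, v) := by
  have hv : ((0, v) : Pt n) = ∑ j, v j • ((0, Pi.single j 1) : Pt n) := by
    ext k
    · simp [Prod.fst_sum]
    · simp [Prod.snd_sum, Pi.single_apply]
  simp only [hv, map_sum, map_smul, smul_eq_mul, pdy]

theorem contDiffAt_pdx {m k : WithTop ℕ∞} (hf : ContDiffAt ℝ k f p) (hmk : m + 1 ≤ k)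
    (i : Fin n) : ContDiffAt ℝ m (pdx f i) p :=
  (hf.fderiv_right hmk).clm_apply contDiffAt_const

theorem contDiffAt_pdy {m k : WithTop ℕ∞} (hf : ContDiffAt ℝ k f p) (hmk : m + 1 ≤ k)
    (i : Fin n) : ContDiffAt ℝ m (pdy f i) p :=
  (hf.fderiv_right hmk).clm_apply contDiffAt_const

theorem differentiableAt_pdx (hf : ContDiffAt ℝ 2 f p) (i : Fin n) :
    DifferentiableAt ℝ (pdx f i) p :=
  (contDiffAt_pdx (m := 1) hf (by norm_num) i).differentiableAt one_ne_zero

theorem differentiableAt_pdy (hf : ContDiffAt ℝ 2 f p) (i : Fin n) :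
    DifferentiableAt ℝ (pdy f i) p :=
  (contDiffAt_pdy (m := 1) hf (by norm_num) i).differentiableAt one_ne_zero

theorem pdy_pdx_comm (hf : ContDiffAt ℝ 2 f p) (i j : Fin n) :
    pdy (pdx f i) j p = pdx (pdy f j) i p :=
  fderiv_fderiv_apply_comm hf _ _

theorem pdyy_comm (hf : ContDiffAt ℝ 2 f p) (i j : Fin n) : pdyy f i j p = pdyy f j i p :=
  fderiv_fderiv_apply_comm hf _ _

end PartialDerivatives

section Spray

variable {n : ℕ} {G : Fin n → Pt n → ℝ} {f : Pt n → ℝ} {p : Pt n}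

theorem Sop_congr {g : Pt n → ℝ} (hfg : f =ᶠ[𝓝 p] g) : Sop G f p = Sop G g p := by
  simp only [Sop, pdx, pdy, hfg.fderiv_eq]

theorem Sop_const_mul (G : Fin n → Pt n → ℝ) (c : ℝ) (f : Pt n → ℝ) (p : Pt n) :
    Sop G (fun q => c * f q) p = c * Sop G f p := by
  simp only [Sop, pdx_const_mul, pdy_const_mul, Finset.mul_sum]
  exact Finset.sum_congr rfl fun k _ => by ring

theorem nablaT_const_mul (G : Fin n → Pt n → ℝ) (c : ℝ) (T : Fin n → Fin n → Pt n → ℝ)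
    (i j : Fin n) (p : Pt n) :
    nablaT G (fun i j q => c * T i j q) i j p = c * nablaT G T i j p := by
  simp only [nablaT, Sop_const_mul, mul_sub, Finset.mul_sum]
  exact congrArg _ (Finset.sum_congr rfl fun k _ => by ring)

theorem nablaT_metricTensor (G : Fin n → Pt n → ℝ) (F : Pt n → ℝ) (i j : Fin n) (p : Pt n) :
    nablaT G (metricTensor F) i j p = 1 / 2 * nablaT G (pdyy fun q => F q ^ 2) i j p :=
  nablaT_const_mul G (1 / 2) (pdyy fun q => F q ^ 2) i j p

theorem differentiableAt_Sop (hG : ∀ k, DifferentiableAt ℝ (G k) p) (hf : ContDiffAt ℝ 2 f p) :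
    DifferentiableAt ℝ (Sop G f) p := by
  have hdx := differentiableAt_pdx hf
  have hdy := differentiableAt_pdy hf
  unfold Sop
  fun_prop

theorem differentiableAt_EL (hG : ∀ k, DifferentiableAt ℝ (G k) p) (hf : ContDiffAt ℝ 3 f p)
    (i : Fin n) : DifferentiableAt ℝ (EL G f i) p :=
  (differentiableAt_Sop hG (contDiffAt_pdy hf (by norm_num) i)).sub
    (differentiableAt_pdx (hf.of_le (by norm_num)) i)

theorem pdy_Sop (hG : ∀ k, DifferentiableAt ℝ (G k) p) (hf : ContDiffAt ℝ 2 f p) (j : Fin n) :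
    pdy (Sop G f) j p =
      pdx f j p + Sop G (pdy f j) p - 2 * ∑ k, Ncoef G k j p * pdy f k p := by
  have hdx := differentiableAt_pdx hf
  have hdy := differentiableAt_pdy hf
  have leibniz (k : Fin n) :
      pdy (fun q => q.2 k * pdx f k q - 2 * G k q * pdy f k q) j p =
        (Pi.single j 1 : Fin n → ℝ) k * pdx f k p
          + (p.2 k * pdx (pdy f j) k p - 2 * G k p * pdy (pdy f j) k p)
          - 2 * (Ncoef G k j p * pdy f k p) := by
    rw [pdy_sub (by fun_prop) (by fun_prop), pdy_mul (by fun_prop) (hdx k),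
      pdy_mul (by fun_prop) (hdy k), pdy_snd_apply, pdy_const_mul, pdy_pdx_comm hf,
      show pdy (pdy f k) j p = pdy (pdy f j) k p from pdyy_comm hf j k, Ncoef]
    ring
  unfold Sop
  rw [pdy_sum (fun k _ => by fun_prop), Finset.sum_congr rfl fun k _ => leibniz k,
    Finset.sum_sub_distrib, Finset.sum_add_distrib, Finset.mul_sum]
  simp [Pi.single_apply]

theorem pdy_EL (hG : ∀ k, DifferentiableAt ℝ (G k) p) (hf : ContDiffAt ℝ 3 f p) (i j : Fin n) :
    pdy (EL G f i) j p =
      pdx (pdy f i) j p - pdx (pdy f j) i p + Sop G (pdyy f j i) p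
        - 2 * ∑ k, Ncoef G k j p * pdyy f k i p := by
  have hf₂ : ContDiffAt ℝ 2 f p := hf.of_le (by norm_num)
  have hfi : ContDiffAt ℝ 2 (pdy f i) p := contDiffAt_pdy hf (by norm_num) i
  unfold EL
  rw [pdy_sub (differentiableAt_Sop hG hfi) (differentiableAt_pdx hf₂ i), pdy_Sop hG hfi,
    pdy_pdx_comm hf₂]
  simp only [pdyy]
  ring

theorem pdy_EL_add_pdy_EL (hG : ∀ k, DifferentiableAt ℝ (G k) p) (hf : ContDiffAt ℝ 3 f p)
    (i j : Fin n) :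
    pdy (EL G f i) j p + pdy (EL G f j) i p = 2 * nablaT G (pdyy f) i j p := by
  have hf₂ : ContDiffAt ℝ 2 f p := hf.of_le (by norm_num)
  have hSop : Sop G (pdyy f j i) p = Sop G (pdyy f i j) p :=
    Sop_congr ((hf₂.eventually (by simp)).mono fun q hq => pdyy_comm hq j i)
  rw [pdy_EL hG hf i j, pdy_EL hG hf j i, hSop, nablaT, Finset.sum_add_distrib,
    Finset.sum_congr rfl fun k _ => by rw [pdyy_comm hf₂ k i]]
  ring

end Spray

section Homogeneity

variable {n : ℕ} {U : Set (Fin n → ℝ)} {k : ℤ} {f : Pt n → ℝ} {p : Pt n}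

theorem isOpen_OmegaSet (hU : IsOpen U) : IsOpen (OmegaSet U) :=
  (hU.preimage continuous_fst).inter (isOpen_compl_singleton.preimage continuous_snd)

/-- The dilation `(x, y) ↦ (x, c y)` of the fibres, as a continuous linear automorphism:
precomposition with it satisfies the chain rule for `fderiv` without any
differentiability assumption. -/
def fiberDilation (n : ℕ) (c : ℝˣ) : Pt n ≃L[ℝ] Pt n :=
  (ContinuousLinearEquiv.refl ℝ (Fin n → ℝ)).prodCongr (ContinuousLinearEquiv.smulLeft c)

namespace PosHomog

theorem fderiv_apply (hf : PosHomog U k f) (hU : IsOpen U) {c : ℝ} (hc : 0 < c)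
    (hp : p ∈ OmegaSet U) (v : Pt n) :
    fderiv ℝ f (p.1, c • p.2) (v.1, c • v.2) = c ^ k * fderiv ℝ f p v := by
  let δ := fiberDilation n (Units.mk0 c hc.ne')
  have hδ : f ∘ δ =ᶠ[𝓝 p] c ^ k • f :=
    eventually_of_mem ((isOpen_OmegaSet hU).mem_nhds hp) (hf c hc)
  have hfderiv : (fderiv ℝ f (δ p)).comp (δ : Pt n →L[ℝ] Pt n) = c ^ k • fderiv ℝ f p := by
    rw [← δ.comp_right_fderiv, hδ.fderiv_eq, fderiv_const_smul_field, Pi.smul_apply]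
  exact DFunLike.congr_fun hfderiv v

protected theorem pdx (hf : PosHomog U k f) (hU : IsOpen U) (i : Fin n) :
    PosHomog U k (pdx f i) := by
  intro c hc p hp
  simpa only [pdx, smul_zero] using hf.fderiv_apply hU hc hp (Pi.single i 1, 0)

protected theorem pdy (hf : PosHomog U k f) (hU : IsOpen U) (i : Fin n) :
    PosHomog U (k - 1) (pdy f i) := by
  intro c hc p hp
  have hscaled : c * pdy f i (p.1, c • p.2) = c ^ k * pdy f i p := by
    simpa only [pdy, ← map_smul, ← smul_eq_mul, Prod.smul_mk, smul_zero] using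
      hf.fderiv_apply hU hc hp (0, Pi.single i 1)
  rw [zpow_sub_one₀ hc.ne', mul_right_comm, ← hscaled]
  field_simp

protected theorem Sop {G : Fin n → Pt n → ℝ} (hf : PosHomog U k f) (hU : IsOpen U)
    (hG : ∀ i, PosHomog U 2 (G i)) : PosHomog U (k + 1) (Sop G f) := by
  intro c hc p hp
  simp only [Sop, Finset.mul_sum]
  refine Finset.sum_congr rfl fun i _ => ?_
  rw [hf.pdx hU i c hc p hp, hf.pdy hU i c hc p hp, hG i c hc p hp, Pi.smul_apply, smul_eq_mul,
    zpow_sub_one₀ hc.ne', zpow_add_one₀ hc.ne', zpow_ofNat]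
  field_simp

protected theorem EL {G : Fin n → Pt n → ℝ} (hf : PosHomog U k f) (hU : IsOpen U)
    (hG : ∀ i, PosHomog U 2 (G i)) (i : Fin n) : PosHomog U k (EL G f i) := by
  intro c hc p hp
  have hSop := (hf.pdy hU i).Sop hU hG c hc p hp
  rw [sub_add_cancel] at hSop
  rw [EL, EL, hSop, hf.pdx hU i c hc p hp, mul_sub]

protected theorem sq (hf : PosHomog U k f) : PosHomog U (k * 2) (fun q => f q ^ 2) := by
  intro c hc p hp
  simp only [hf c hc p hp, mul_pow, zpow_mul, zpow_ofNat]

theorem sum_snd_mul_pdy (hf : PosHomog U k f) (hp : p ∈ OmegaSet U) (hfd : DifferentiableAt ℝ f p) :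
    ∑ j, p.2 j * pdy f j p = k * f p := by
  have hray : HasDerivAt (fun t : ℝ => ((p.1, t • p.2) : Pt n)) (0, p.2) 1 := by
    simpa using (hasDerivAt_const (1 : ℝ) p.1).prodMk ((hasDerivAt_id (1 : ℝ)).smul_const p.2)
  have hchain : HasDerivAt (fun t : ℝ => f (p.1, t • p.2)) (fderiv ℝ f p (0, p.2)) 1 :=
    HasFDerivAt.comp_hasDerivAt_of_eq (1 : ℝ) hfd.hasFDerivAt hray (by simp)
  have hpow : HasDerivAt (fun t : ℝ => t ^ k * f p) (k * f p) 1 := by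
    simpa using (hasDerivAt_zpow k (1 : ℝ) (Or.inl one_ne_zero)).mul_const (f p)
  have hhom : (fun t : ℝ => f (p.1, t • p.2)) =ᶠ[𝓝 1] fun t => t ^ k * f p :=
    (lt_mem_nhds one_pos).mono fun t ht => hf t ht p hp
  rw [sum_mul_pdy_eq_fderiv]
  exact hchain.unique (hpow.congr_of_eventuallyEq hhom)

section Killing

variable {E : Fin n → Pt n → ℝ}

theorem sum_snd_mul_eq_zero_of_pdy_skew (hE : ∀ i, PosHomog U k (E i)) (hk : k ≠ 0)
    (hp : p ∈ OmegaSet U) (hd : ∀ i, DifferentiableAt ℝ (E i) p)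
    (hskew : ∀ i j, pdy (E i) j p + pdy (E j) i p = 0) :
    ∑ i, p.2 i * E i p = 0 := by
  let B := ∑ i, ∑ j, p.2 i * (p.2 j * pdy (E i) j p)
  have hB : B = k * ∑ i, p.2 i * E i p := by
    rw [Finset.mul_sum]
    refine Finset.sum_congr rfl fun i _ => ?_
    rw [← Finset.mul_sum, (hE i).sum_snd_mul_pdy hp (hd i)]
    ring
  have hB_add_self : B + B = 0 := by
    nth_rw 2 [show B = _ from Finset.sum_comm]
    simp only [B, ← Finset.sum_add_distrib]
    refine Finset.sum_eq_zero fun i _ => Finset.sum_eq_zero fun j _ => ?_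
    linear_combination p.2 i * p.2 j * hskew i j
  have hk' : (k : ℝ) ≠ 0 := Int.cast_ne_zero.mpr hk
  exact (mul_eq_zero.mp (hB.symm.trans (add_self_eq_zero.mp hB_add_self))).resolve_left hk'

theorem eq_zero_of_pdy_skew (hE : ∀ i, PosHomog U k (E i)) (hU : IsOpen U) (hk₀ : k ≠ 0)
    (hk₁ : k ≠ 1) (hd : ∀ i, ∀ p ∈ OmegaSet U, DifferentiableAt ℝ (E i) p)
    (hskew : ∀ i j, ∀ p ∈ OmegaSet U, pdy (E i) j p + pdy (E j) i p = 0)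
    (i : Fin n) (hp : p ∈ OmegaSet U) : E i p = 0 := by
  have hradial : (fun q : Pt n => ∑ l, q.2 l * E l q) =ᶠ[𝓝 p] 0 :=
    eventually_of_mem ((isOpen_OmegaSet hU).mem_nhds hp) fun q hq =>
      sum_snd_mul_eq_zero_of_pdy_skew hE hk₀ hq (fun l => hd l q hq) fun l j => hskew l j q hq
  have hdp (l : Fin n) : DifferentiableAt ℝ (E l) p := hd l p hp
  have hterm (l : Fin n) : pdy (fun q => q.2 l * E l q) i p =
      (Pi.single i 1 : Fin n → ℝ) l * E l p - p.2 l * pdy (E i) l p := by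
    rw [pdy_mul (by fun_prop) (hdp l), pdy_snd_apply]
    linear_combination p.2 l * hskew l i p hp
  have hmul : (1 - k : ℝ) * E i p = 0 := calc
    (1 - k : ℝ) * E i p = ∑ l, pdy (fun q => q.2 l * E l q) i p := by
      simp_rw [hterm]
      rw [Finset.sum_sub_distrib, (hE i).sum_snd_mul_pdy hp (hdp i)]
      simp [Pi.single_apply, sub_mul]
    _ = pdy (fun q => ∑ l, q.2 l * E l q) i p := (pdy_sum (fun l _ => by fun_prop) i).symm
    _ = 0 := pdy_eq_zero_of_eventuallyEq_zero hradial i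
  have hk' : (1 - k : ℝ) ≠ 0 := sub_ne_zero.mpr (mod_cast hk₁.symm)
  exact (mul_eq_zero.mp hmul).resolve_left hk'

end Killing

end PosHomog

end Homogeneity

theorem statement3_general {n : ℕ} {U : Set (Fin n → ℝ)} (hU : IsOpen U)
    {G : Fin n → Pt n → ℝ}
    (hGd : ∀ i, DifferentiableOn ℝ (G i) (OmegaSet U)) (hGh : ∀ i, PosHomog U 2 (G i))
    {L : Pt n → ℝ} (hLd : ContDiffOn ℝ 3 L (OmegaSet U)) (hLh : PosHomog U 2 L) :
    (∀ i, ∀ p ∈ OmegaSet U, EL G L i p = 0) ↔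
      ∀ i j, ∀ p ∈ OmegaSet U, nablaT G (pdyy L) i j p = 0 := by
  have hnhds {p : Pt n} (hp : p ∈ OmegaSet U) := (isOpen_OmegaSet hU).mem_nhds hp
  have hG {p : Pt n} (hp : p ∈ OmegaSet U) (i : Fin n) := (hGd i).differentiableAt (hnhds hp)
  have hL {p : Pt n} (hp : p ∈ OmegaSet U) := hLd.contDiffAt (hnhds hp)
  constructor
  · intro hEL i j p hp
    have hpdy (l m : Fin n) : pdy (EL G L l) m p = 0 :=
      pdy_eq_zero_of_eventuallyEq_zero (eventually_of_mem (hnhds hp) (hEL l)) m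
    have hsymm := pdy_EL_add_pdy_EL (hG hp) (hL hp) i j
    rw [hpdy, hpdy] at hsymm
    linarith
  · intro hnabla i p hp
    refine PosHomog.eq_zero_of_pdy_skew (fun l => hLh.EL hU hGh l) hU two_ne_zero (by norm_num)
      (fun l q hq => differentiableAt_EL (hG hq) (hL hq) l) (fun l m q hq => ?_) i hp
    rw [pdy_EL_add_pdy_EL (hG hq) (hL hq), hnabla l m q hq, mul_zero]

/-- Theorem 1: a spray `S` is the geodesic spray of the Finsler structure `F`
iff the metric tensor is covariant constant: `∇g_{ij} = 0`. -/
theorem statement3 {n : ℕ} (hn : 1 ≤ n) (U : Set (Fin n → ℝ)) (hU : IsOpen U)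
    (G : Fin n → Pt n → ℝ) (hG : IsSpray U G)
    (F : Pt n → ℝ) (hF : IsFinsler U F) :
    (∀ i, ∀ p ∈ OmegaSet U, EL G (fun q => F q ^ 2) i p = 0) ↔
      (∀ i j, ∀ p ∈ OmegaSet U, nablaT G (metricTensor F) i j p = 0) := by
  simpa [nablaT_metricTensor] using statement3_general hU
    (fun i => (hG i).1.differentiableOn (by simp)) (fun i => (hG i).2)
    (contDiffOn_infty.mp (hF.1.pow 2) 3) hF.2.2.1.sq
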